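/- Let ρ ∈ (0, 1) and set k = ρ/√(1 − ρ²). Let W₁, W₂ be independent standard normal random variables and put Z₁ = W₁ and Z₂ = ρW₁ + √(1 − ρ²)·W₂. Then there exist constants C > 0 and t₀ > 0 such that for all t ≥ t₀: | E[ Z₁ · 1{Z₁ ≥ t and Z₂ ≥ ρt} ] − φ(t)·( 1/2 + k/(√(2π) t) ) | ≤ C·φ(t)/t³. -/

import Mathlib

open MeasureTheory ProbabilityTheory

/-- The standard normal density `φ(s) = exp(−s²/2)/√(2π)`. -/
noncomputable def stdNormalPDF (s : ℝ) : ℝ := Real.exp (-s ^ 2 / 2) / Real.sqrt (2 * Real.pi)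

lemma pdf_eq (x : ℝ) : gaussianPDFReal 0 1 x = stdNormalPDF x := by
  unfold gaussianPDFReal stdNormalPDF
  simp
  field_simp

lemma pdf_tail (c : ℝ) : ∫ x in Set.Ici c, x ∂(gaussianReal 0 1) = stdNormalPDF c := by
  rw [← integral_indicator measurableSet_Ici, integral_gaussianReal_eq_integral_smul one_ne_zero]
  have h1 : ∀ x, gaussianPDFReal 0 1 x • (Set.Ici c).indicator (fun x => x) x
      = (Set.Ici c).indicator (fun x => x * stdNormalPDF x) x := by
    intro x
    by_cases h : x ∈ Set.Ici c <;> simp [h, pdf_eq, mul_comm]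
  simp_rw [h1]
  rw [integral_indicator measurableSet_Ici, integral_Ici_eq_integral_Ioi]
  have hd : ∀ x ∈ Set.Ici c, HasDerivAt (fun x => -stdNormalPDF x) (x * stdNormalPDF x) x := by
    intro x _
    unfold stdNormalPDF
    have := ((((hasDerivAt_id x).pow 2).neg.div_const 2).exp.div_const (Real.sqrt (2 * Real.pi))).neg
    refine this.congr_deriv ?_
    simp
    ring
  have hi : IntegrableOn (fun x => x * stdNormalPDF x) (Set.Ioi c) := by
    have := (integrable_mul_exp_neg_mul_sq (b := 1 / 2) (by norm_num)).div_const (Real.sqrt (2 * Real.pi))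
    refine Integrable.integrableOn ?_
    convert this using 2 with x
    unfold stdNormalPDF
    rw [mul_div_assoc]; congr 3; ring
  have ht : Filter.Tendsto (fun x => -stdNormalPDF x) Filter.atTop (nhds 0) := by
    have h2 : Filter.Tendsto (fun x : ℝ => -x ^ 2 / 2) Filter.atTop Filter.atBot := by
      have : Filter.Tendsto (fun x : ℝ => x ^ 2 / 2) Filter.atTop Filter.atTop :=
        (Filter.tendsto_pow_atTop (by norm_num)).atTop_div_const (by norm_num)
      have := Filter.tendsto_neg_atTop_atBot.comp this
      refine this.congr fun x => ?_
      simp; ring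
    have := ((Real.tendsto_exp_atBot.comp h2).div_const (Real.sqrt (2 * Real.pi))).neg
    simpa [stdNormalPDF, Function.comp_def] using this
  rw [integral_Ioi_of_hasDerivAt_of_tendsto' hd hi ht]
  ring

lemma half_mass : ∫ y in Set.Ioi (0 : ℝ), stdNormalPDF y = 1 / 2 := by
  unfold stdNormalPDF
  rw [integral_div]
  have : ∀ y : ℝ, Real.exp (-y ^ 2 / 2) = Real.exp (-(1 / 2) * y ^ 2) := by
    intro y; congr 1; ring
  simp_rw [this]
  rw [integral_gaussian_Ioi]
  have : Real.pi / (1 / 2) = 2 * Real.pi := by ring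
  rw [this]
  have : Real.sqrt (2 * Real.pi) ≠ 0 := by positivity
  field_simp

lemma pdf_cont : Continuous stdNormalPDF := by
  unfold stdNormalPDF; fun_prop

lemma pdf_nonneg (x : ℝ) : 0 ≤ stdNormalPDF x := by
  unfold stdNormalPDF; positivity

lemma pdf_le (x : ℝ) : stdNormalPDF x ≤ stdNormalPDF 0 := by
  unfold stdNormalPDF
  refine div_le_div_of_nonneg_right (Real.exp_le_exp.2 ?_) (Real.sqrt_nonneg _)
  nlinarith [sq_nonneg x]

lemma pdf_int : Integrable stdNormalPDF := by
  have := integrable_gaussianPDFReal 0 1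
  exact this.congr (Filter.Eventually.of_forall pdf_eq)

lemma moment0 {s : ℝ} (hs : 0 < s) :
    IntegrableOn (fun u : ℝ => Real.exp (-(s * u))) (Set.Ioi 0) ∧
    ∫ u in Set.Ioi (0 : ℝ), Real.exp (-(s * u)) = 1 / s := by
  have h1 := integrableOn_exp_mul_Ioi (neg_lt_zero.2 hs) 0
  have h2 := integral_exp_mul_Ioi (neg_lt_zero.2 hs) 0
  simp only [neg_mul] at h1 h2
  refine ⟨h1, h2.trans ?_⟩
  simp

lemma moment2 {s : ℝ} (hs : 0 < s) :
    IntegrableOn (fun u : ℝ => u ^ 2 * Real.exp (-(s * u))) (Set.Ioi 0) ∧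
    ∫ u in Set.Ioi (0 : ℝ), u ^ 2 * Real.exp (-(s * u)) = 2 / s ^ 3 := by
  have h2 : ∫ u in Set.Ioi (0 : ℝ), u ^ 2 * Real.exp (-(s * u)) = 2 / s ^ 3 := by
    have h := Real.integral_rpow_mul_exp_neg_mul_Ioi (a := 3) (r := s) (by norm_num) hs
    have e : (3 : ℝ) - 1 = ((2 : ℕ) : ℝ) := by norm_num
    have g : Real.Gamma 3 = 2 := by
      rw [show (3 : ℝ) = ((2 : ℕ) : ℝ) + 1 by norm_num, Real.Gamma_nat_eq_factorial]
      norm_num [Nat.factorial]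
    rw [g, e] at h
    simp only [Real.rpow_natCast] at h
    rw [h, show (3 : ℝ) = ((3 : ℕ) : ℝ) by norm_num, Real.rpow_natCast]
    field_simp
  refine ⟨?_, h2⟩
  by_contra hc
  rw [integral_undef hc] at h2
  have : 0 < 2 / s ^ 3 := by positivity
  linarith

lemma laplace_bound {s a : ℝ} (hs : 0 < s) (ha : 0 < a) :
    |(∫ u in Set.Ioi (0 : ℝ), Real.exp (-(s * u)) * Real.exp (-(a * u ^ 2))) - 1 / s|
      ≤ a * (2 / s ^ 3) := by
  obtain ⟨i0, m0⟩ := moment0 hs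
  obtain ⟨i2, m2⟩ := moment2 hs
  have i1 : IntegrableOn (fun u : ℝ => Real.exp (-(s * u)) * Real.exp (-(a * u ^ 2)))
      (Set.Ioi 0) := by
    refine Integrable.mono' i0 (by fun_prop) (Filter.Eventually.of_forall fun u => ?_)
    rw [Real.norm_of_nonneg (by positivity)]
    have : Real.exp (-(a * u ^ 2)) ≤ 1 := Real.exp_le_one_iff.2 (by nlinarith [mul_nonneg ha.le (sq_nonneg u)])
    nlinarith [Real.exp_pos (-(s * u))]
  rw [← m0, ← m2, ← integral_const_mul, ← integral_sub i1 i0]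
  refine (abs_integral_le_integral_abs).trans ?_
  refine integral_mono (i1.sub i0).abs (i2.const_mul a) fun u => ?_
  have h1 : Real.exp (-(a * u ^ 2)) ≤ 1 := Real.exp_le_one_iff.2 (by nlinarith [mul_nonneg ha.le (sq_nonneg u)])
  have h2 := Real.add_one_le_exp (-(a * u ^ 2))
  have h3 := Real.exp_pos (-(s * u))
  simp only
  rw [abs_le]
  constructor <;> nlinarith [mul_nonneg ha.le (sq_nonneg u), mul_nonneg h3.le (mul_nonneg ha.le (sq_nonneg u))]

lemma expect_eq {Ω : Type*} [MeasurableSpace Ω] (μ : Measure Ω) [IsProbabilityMeasure μ]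
    (b : ℝ) (W₁ W₂ : Ω → ℝ) (hW₁ : Measurable W₁) (hW₂ : Measurable W₂)
    (hlaw₁ : μ.map W₁ = gaussianReal 0 1) (hlaw₂ : μ.map W₂ = gaussianReal 0 1)
    (hindep : IndepFun W₁ W₂ μ) (t : ℝ) :
    ∫ ω in {ω | t ≤ W₁ ω ∧ t - b * W₂ ω ≤ W₁ ω}, W₁ ω ∂μ
      = ∫ y, stdNormalPDF y * stdNormalPDF (max t (t - b * y)) := by
  have hmap := hindep.map_prod_eq_prod_map_map hW₁.aemeasurable hW₂.aemeasurable
  rw [hlaw₁, hlaw₂] at hmap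
  let S : Set (ℝ × ℝ) := {p | t ≤ p.1 ∧ t - b * p.2 ≤ p.1}
  have hS1 : MeasurableSet {p : ℝ × ℝ | t ≤ p.1} :=
    measurableSet_le (by fun_prop) (by fun_prop)
  have hS2 : MeasurableSet {p : ℝ × ℝ | t - b * p.2 ≤ p.1} :=
    measurableSet_le (by fun_prop) (by fun_prop)
  have hS : MeasurableSet S := hS1.inter hS2
  have h1 : ∫ ω in {ω | t ≤ W₁ ω ∧ t - b * W₂ ω ≤ W₁ ω}, W₁ ω ∂μ
      = ∫ p in S, p.1 ∂((gaussianReal 0 1).prod (gaussianReal 0 1)) := by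
    rw [← hmap, setIntegral_map hS (by fun_prop) (by fun_prop)]
    rfl
  have hint : Integrable (fun p : ℝ × ℝ => p.1) ((gaussianReal 0 1).prod (gaussianReal 0 1)) := by
    have : Integrable (fun x : ℝ => x) (gaussianReal 0 1) :=
      (memLp_id_gaussianReal (μ := 0) (v := 1) 1).integrable (by simp)
    exact this.comp_fst _
  rw [h1, ← integral_indicator hS, integral_prod_symm _ (hint.indicator hS)]
  have h2 : ∀ y, ∫ x, S.indicator (fun p : ℝ × ℝ => p.1) (x, y) ∂(gaussianReal 0 1)
      = stdNormalPDF (max t (t - b * y)) := by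
    intro y
    rw [← pdf_tail, ← integral_indicator measurableSet_Ici]
    congr 1
    ext x
    by_cases h : max t (t - b * y) ≤ x
    · have h' : (x, y) ∈ S := max_le_iff.1 h
      rw [Set.indicator_of_mem h', Set.indicator_of_mem (show x ∈ Set.Ici _ from h)]
    · have h' : (x, y) ∉ S := fun h' => h (max_le_iff.2 h')
      rw [Set.indicator_of_notMem h', Set.indicator_of_notMem (show x ∉ Set.Ici _ from h)]
  simp_rw [h2]
  rw [integral_gaussianReal_eq_integral_smul one_ne_zero]
  simp_rw [pdf_eq, smul_eq_mul]

lemma split_eq {b t : ℝ} (hb : 0 < b) :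
    ∫ y, stdNormalPDF y * stdNormalPDF (max t (t - b * y))
      = stdNormalPDF t * (1 / 2 + 1 / Real.sqrt (2 * Real.pi) *
        ∫ u in Set.Ioi (0 : ℝ), Real.exp (-((b * t) * u)) *
          Real.exp (-(((1 + b ^ 2) / 2) * u ^ 2))) := by
  have hi : Integrable (fun y => stdNormalPDF y * stdNormalPDF (max t (t - b * y))) := by
    refine Integrable.mono' (pdf_int.mul_const (stdNormalPDF 0)) ?_
      (Filter.Eventually.of_forall fun y => ?_)
    · have := pdf_cont
      exact Continuous.aestronglyMeasurable (by fun_prop)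
    · rw [Real.norm_of_nonneg (mul_nonneg (pdf_nonneg _) (pdf_nonneg _))]
      exact mul_le_mul_of_nonneg_left (pdf_le _) (pdf_nonneg _)
  rw [← intervalIntegral.integral_Iic_add_Ioi (b := 0) hi.integrableOn hi.integrableOn]
  have hr : ∫ y in Set.Ioi (0 : ℝ), stdNormalPDF y * stdNormalPDF (max t (t - b * y))
      = stdNormalPDF t * (1 / 2) := by
    rw [← half_mass, ← integral_const_mul]
    refine setIntegral_congr_fun measurableSet_Ioi fun y hy => ?_
    have : 0 < b * y := mul_pos hb hy
    rw [max_eq_left (by linarith), mul_comm]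
  have hl : ∫ y in Set.Iic (0 : ℝ), stdNormalPDF y * stdNormalPDF (max t (t - b * y))
      = stdNormalPDF t * (1 / Real.sqrt (2 * Real.pi) *
        ∫ u in Set.Ioi (0 : ℝ), Real.exp (-((b * t) * u)) *
          Real.exp (-(((1 + b ^ 2) / 2) * u ^ 2))) := by
    have := integral_comp_neg_Iic (0 : ℝ)
      (fun y => stdNormalPDF (-y) * stdNormalPDF (max t (t - b * (-y))))
    simp only [neg_neg, neg_zero] at this
    rw [this, ← mul_assoc, ← integral_const_mul]
    refine setIntegral_congr_fun measurableSet_Ioi fun y hy => ?_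
    have : 0 < b * y := mul_pos hb hy
    rw [max_eq_right (by linarith)]
    unfold stdNormalPDF
    have e : Real.exp (-(-y) ^ 2 / 2) * Real.exp (-(t - b * -y) ^ 2 / 2)
        = Real.exp (-t ^ 2 / 2) * (Real.exp (-((b * t) * y)) *
          Real.exp (-(((1 + b ^ 2) / 2) * y ^ 2))) := by
      rw [← Real.exp_add, ← Real.exp_add, ← Real.exp_add]
      congr 1; ring
    rw [div_mul_div_comm, e]
    field_simp
  rw [hr, hl]
  ring

/-- Bivariate normal truncated-mean expansion: for `Z₁ = W₁`, `Z₂ = ρW₁ + √(1−ρ²)W₂` with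
`W₁, W₂` independent standard normals and `k = ρ/√(1−ρ²)`, there exist `C > 0` and `t₀ > 0` such
that for all `t ≥ t₀`,
`|E[Z₁ 1{Z₁ ≥ t, Z₂ ≥ ρt}] − φ(t)(1/2 + k/(√(2π)t))| ≤ C φ(t)/t³`. -/
theorem stmt10 {Ω : Type*} [MeasurableSpace Ω] (μ : Measure Ω) [IsProbabilityMeasure μ]
    (ρ : ℝ) (hρ0 : 0 < ρ) (hρ1 : ρ < 1)
    (W₁ W₂ : Ω → ℝ) (hW₁ : Measurable W₁) (hW₂ : Measurable W₂)
    (hlaw₁ : μ.map W₁ = gaussianReal 0 1) (hlaw₂ : μ.map W₂ = gaussianReal 0 1)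
    (hindep : IndepFun W₁ W₂ μ) :
    ∃ C > (0 : ℝ), ∃ t₀ > (0 : ℝ), ∀ t ≥ t₀,
      |(∫ ω in {ω | t ≤ W₁ ω ∧ ρ * t ≤ ρ * W₁ ω + Real.sqrt (1 - ρ ^ 2) * W₂ ω}, W₁ ω ∂μ) -
          stdNormalPDF t * (1 / 2 +
            (ρ / Real.sqrt (1 - ρ ^ 2)) / (Real.sqrt (2 * Real.pi) * t))| ≤
        C * stdNormalPDF t / t ^ 3 := by
  have hs : 0 < Real.sqrt (1 - ρ ^ 2) := Real.sqrt_pos.2 (by nlinarith)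
  obtain ⟨s, hsdef⟩ : ∃ s, s = Real.sqrt (1 - ρ ^ 2) := ⟨_, rfl⟩
  rw [← hsdef] at hs ⊢
  obtain ⟨b, hbdef⟩ : ∃ b, b = s / ρ := ⟨_, rfl⟩
  have hb : 0 < b := by rw [hbdef]; positivity
  have hp : 0 < Real.sqrt (2 * Real.pi) := by positivity
  refine ⟨1 / Real.sqrt (2 * Real.pi) * ((1 + b ^ 2) / 2 * (2 / b ^ 3)), by positivity, 1,
    one_pos, fun t ht => ?_⟩
  have ht0 : 0 < t := by linarith
  have hset : {ω | t ≤ W₁ ω ∧ ρ * t ≤ ρ * W₁ ω + s * W₂ ω}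
      = {ω | t ≤ W₁ ω ∧ t - b * W₂ ω ≤ W₁ ω} := by
    ext ω
    simp only [Set.mem_ofPred_eq]
    have hsb : s = ρ * b := by rw [hbdef]; field_simp
    refine and_congr_right fun _ => ?_
    rw [hsb, mul_assoc, ← mul_add, mul_le_mul_iff_right₀ hρ0, sub_le_iff_le_add]
  rw [hset, expect_eq μ b W₁ W₂ hW₁ hW₂ hlaw₁ hlaw₂ hindep t, split_eq hb]
  have key := laplace_bound (s := b * t) (a := (1 + b ^ 2) / 2) (by positivity) (by positivity)
  have hk : (ρ / s) / (Real.sqrt (2 * Real.pi) * t)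
      = 1 / Real.sqrt (2 * Real.pi) * (1 / (b * t)) := by
    rw [hbdef]; field_simp
  rw [hk]
  set I := ∫ u in Set.Ioi (0 : ℝ), Real.exp (-((b * t) * u)) *
          Real.exp (-(((1 + b ^ 2) / 2) * u ^ 2)) with hI
  have e : stdNormalPDF t * (1 / 2 + 1 / Real.sqrt (2 * Real.pi) * I)
      - stdNormalPDF t * (1 / 2 + 1 / Real.sqrt (2 * Real.pi) * (1 / (b * t)))
      = (stdNormalPDF t * (1 / Real.sqrt (2 * Real.pi))) * (I - 1 / (b * t)) := by ring
  have hnn : 0 ≤ stdNormalPDF t * (1 / Real.sqrt (2 * Real.pi)) :=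
    mul_nonneg (pdf_nonneg t) (by positivity)
  rw [e, abs_mul, abs_of_nonneg hnn]
  refine (mul_le_mul_of_nonneg_left key hnn).trans (le_of_eq ?_)
  field_simp
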